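/- Let h(t) be a smooth one-parameter family of Riemannian metrics and define, for a spatial function f, the field-dependent vector field ζ_f[h]ⁱ(x,t) = ∂_j f(x) ∫_{t₀}^t hʲⁱ(x,t′) dt′ and the variation δ_f h = f ḣ + L_{ζ_f[h]} h. For a time-independent spatial vector field χ with δ_χ h = L_χ h, the commutator satisfies [δ_f, δ_χ] h = −δ_{L_χ f} h = −(χ(f) ḣ + L_{ζ_{χ(f)}[h]} h). -/

import Mathlib

open scoped BigOperators

/-- Partial derivative in the `k`-th coordinate direction. -/
noncomputable def pd {dd : ℕ} (k : Fin dd) (F : (Fin dd → ℝ) → ℝ)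
    (x : Fin dd → ℝ) : ℝ :=
  fderiv ℝ F x (Pi.single k 1)

/-- Coordinate expression of the Lie derivative of a (0,2)-tensor (metric) `m`
along the vector field `X`:
`(L_X m)_{ij} = X^k ∂_k m_{ij} + m_{kj} ∂_i X^k + m_{ik} ∂_j X^k`. -/
noncomputable def matLie {dd : ℕ} (X : (Fin dd → ℝ) → Fin dd → ℝ)
    (m : (Fin dd → ℝ) → Matrix (Fin dd) (Fin dd) ℝ) (x : Fin dd → ℝ) :
    Matrix (Fin dd) (Fin dd) ℝ :=
  Matrix.of fun i j =>
    (∑ k, X x k * pd k (fun y => m y i j) x)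
      + ∑ k, (m x k j * pd i (fun y => X y k) x + m x i k * pd j (fun y => X y k) x)

/-- The field-dependent vector field
`ζ_f[h]ⁱ(x,t) = ∂_j f(x) ∫_{t₀}^t hʲⁱ(x,t′) dt′` (with `hʲⁱ` the inverse metric). -/
noncomputable def zeta {dd : ℕ} (f : (Fin dd → ℝ) → ℝ)
    (h : ℝ → (Fin dd → ℝ) → Matrix (Fin dd) (Fin dd) ℝ) (t₀ t : ℝ)
    (x : Fin dd → ℝ) : Fin dd → ℝ :=
  fun i => ∑ j, pd j f x * ∫ s in t₀..t, (h s x)⁻¹ j i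

/-- The local-boost variation `δ_f h = f ḣ + L_{ζ_f[h]} h`. -/
noncomputable def deltaF {dd : ℕ} (f : (Fin dd → ℝ) → ℝ)
    (h : ℝ → (Fin dd → ℝ) → Matrix (Fin dd) (Fin dd) ℝ) (t₀ t : ℝ)
    (x : Fin dd → ℝ) : Matrix (Fin dd) (Fin dd) ℝ :=
  Matrix.of fun i j =>
    f x * deriv (fun s => h s x i j) t + matLie (zeta f h t₀ t) (h t) x i j

/-- The spatial-diffeomorphism variation `δ_χ h = L_χ h`. -/
noncomputable def deltaChi {dd : ℕ} (χ : (Fin dd → ℝ) → Fin dd → ℝ)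
    (h : ℝ → (Fin dd → ℝ) → Matrix (Fin dd) (Fin dd) ℝ) (t : ℝ)
    (x : Fin dd → ℝ) : Matrix (Fin dd) (Fin dd) ℝ :=
  matLie χ (h t) x

open MeasureTheory Filter Topology

lemma param_hasFDerivAt {V F : Type} [NormedAddCommGroup V] [NormedSpace ℝ V]
    [FiniteDimensional ℝ V] [NormedAddCommGroup F] [NormedSpace ℝ F] [CompleteSpace F]
    (G : V → ℝ → F) (hG : ContDiff ℝ 1 (fun q : V × ℝ => G q.1 q.2)) (a b : ℝ) (v : V) :
    HasFDerivAt (fun v => ∫ t in a..b, G v t)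
      (∫ t in a..b, fderiv ℝ (fun w => G w t) v) v := by
  have : ProperSpace V := FiniteDimensional.proper ℝ V
  have hc : Continuous (fun q : V × ℝ => fderiv ℝ (fun w => G w q.2) q.1) := by
    have h1 : ContDiff ℝ 1 (Function.uncurry (fun (q : V × ℝ) (w : V) => G w q.2)) :=
      hG.comp (contDiff_snd.prodMk (contDiff_snd.comp contDiff_fst))
    exact (ContDiff.fderiv (n := 0) (m := 1) h1 contDiff_fst (by simp)).continuous
  obtain ⟨C, hC⟩ := ((isCompact_closedBall v 1).prod (isCompact_uIcc (a := a) (b := b))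
    ).exists_bound_of_continuousOn hc.continuousOn
  refine intervalIntegral.hasFDerivAt_integral_of_dominated_of_fderiv_le
    (F' := fun w t => fderiv ℝ (fun w => G w t) w) (bound := fun _ => C)
    (s := Metric.closedBall v 1) (Metric.closedBall_mem_nhds v one_pos) ?_ ?_ ?_ ?_ ?_ ?_
  · refine Eventually.of_forall fun w => Continuous.aestronglyMeasurable ?_
    exact hG.continuous.comp (Continuous.prodMk_right w)
  · exact (hG.continuous.comp (Continuous.prodMk_right v)).intervalIntegrable _ _
  · exact (hc.comp (Continuous.prodMk_right v)).aestronglyMeasurable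
  · refine Eventually.of_forall fun t ht w hw => hC (w, t) ⟨hw, Set.uIoc_subset_uIcc ht⟩
  · exact intervalIntegrable_const
  · refine Eventually.of_forall fun t ht w hw => ?_
    have : ContDiff ℝ 1 (fun w => G w t) := hG.comp (contDiff_id.prodMk contDiff_const)
    exact (this.differentiable one_ne_zero w).hasFDerivAt

lemma param_contDiff_nat (n : ℕ) {V : Type} [NormedAddCommGroup V] [NormedSpace ℝ V]
    [FiniteDimensional ℝ V] (a b : ℝ) : ∀ {F : Type} [NormedAddCommGroup F] [NormedSpace ℝ F]
    [CompleteSpace F] (G : V → ℝ → F)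
    (_ : ContDiff ℝ (⊤ : ℕ∞) (fun q : V × ℝ => G q.1 q.2)),
    ContDiff ℝ n (fun v => ∫ t in a..b, G v t) := by
  induction n with
  | zero =>
    intro F _ _ _ G hG
    refine contDiff_zero.2 ?_
    exact continuous_iff_continuousAt.2 fun v =>
      (param_hasFDerivAt G (hG.of_le (by exact_mod_cast le_top)) a b v).continuousAt
  | succ n ih =>
    intro F _ _ _ G hG
    have hd := param_hasFDerivAt G (hG.of_le (by exact_mod_cast le_top)) a b
    refine (contDiff_succ_iff_fderiv (n := n)).2 ⟨fun v => (hd v).differentiableAt, by simp, ?_⟩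
    have : fderiv ℝ (fun v => ∫ t in a..b, G v t) =
        fun v => ∫ t in a..b, fderiv ℝ (fun w => G w t) v := funext fun v => (hd v).fderiv
    rw [this]
    refine ih (fun v t => fderiv ℝ (fun w => G w t) v) ?_
    have h1 : ContDiff ℝ (⊤ : ℕ∞) (Function.uncurry (fun (q : V × ℝ) (w : V) => G w q.2)) :=
      hG.comp (contDiff_snd.prodMk (contDiff_snd.comp contDiff_fst))
    exact ContDiff.fderiv (m := (⊤ : ℕ∞)) h1 contDiff_fst (by simp)

lemma param_contDiff {V F : Type} [NormedAddCommGroup V] [NormedSpace ℝ V]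
    [FiniteDimensional ℝ V] (a b : ℝ) [NormedAddCommGroup F] [NormedSpace ℝ F]
    [CompleteSpace F] (G : V → ℝ → F)
    (hG : ContDiff ℝ (⊤ : ℕ∞) (fun q : V × ℝ => G q.1 q.2)) :
    ContDiff ℝ (⊤ : ℕ∞) (fun v => ∫ t in a..b, G v t) :=
  contDiff_infty.2 fun n => param_contDiff_nat n a b G hG

lemma smooth_recip (c : ℝ) (hc : 0 < c) : ∃ r : ℝ → ℝ, ContDiff ℝ (⊤ : ℕ∞) r ∧
    ∀ y, c < |y| → r y = y⁻¹ := by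
  let g : ContDiffBump (0 : ℝ) := ⟨c / 2, c, by positivity, by linarith⟩
  refine ⟨fun y => (1 - g y) * y⁻¹, ?_, ?_⟩
  · refine contDiff_iff_contDiffAt.2 fun y => ?_
    by_cases hy : y = 0
    · subst hy
      have : (fun y => (1 - g y) * y⁻¹) =ᶠ[𝓝 0] fun _ => 0 := by
        filter_upwards [g.eventuallyEq_one] with y hy
        simp [hy]
      exact contDiffAt_const.congr_of_eventuallyEq this
    · exact (contDiffAt_const.sub g.contDiffAt).mul (contDiffAt_inv ℝ hy)
  · intro y hy
    have : g y = 0 := g.zero_of_le_dist (by simpa using hy.le)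
    simp [this]

/-! partial derivative API -/

lemma pd_contDiff_param {dd : ℕ} {A : Type} [NormedAddCommGroup A] [NormedSpace ℝ A]
    (k : Fin dd) (F : A → (Fin dd → ℝ) → ℝ)
    (hF : ContDiff ℝ (⊤ : ℕ∞) (fun q : A × (Fin dd → ℝ) => F q.1 q.2)) :
    ContDiff ℝ (⊤ : ℕ∞) (fun q : A × (Fin dd → ℝ) => pd k (F q.1) q.2) := by
  have h1 : ContDiff ℝ (⊤ : ℕ∞)
      (Function.uncurry (fun (q : A × (Fin dd → ℝ)) (w : Fin dd → ℝ) => F q.1 w)) :=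
    hF.comp ((contDiff_fst.comp contDiff_fst).prodMk contDiff_snd)
  exact (ContDiff.fderiv (m := (⊤ : ℕ∞)) h1 contDiff_snd (by simp)).clm_apply contDiff_const

lemma pd_contDiff {dd : ℕ} (k : Fin dd) (F : (Fin dd → ℝ) → ℝ)
    (hF : ContDiff ℝ (⊤ : ℕ∞) F) : ContDiff ℝ (⊤ : ℕ∞) (fun x => pd k F x) :=
  (hF.fderiv_right (m := (⊤ : ℕ∞)) (by simp)).clm_apply contDiff_const

lemma smd {V W : Type} [NormedAddCommGroup V] [NormedSpace ℝ V] [NormedAddCommGroup W]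
    [NormedSpace ℝ W] {F : V → W} (hF : ContDiff ℝ (⊤ : ℕ∞) F) (x : V) :
    DifferentiableAt ℝ F x := hF.differentiable (by simp) x

section
variable {dd : ℕ} (k : Fin dd) {F G : (Fin dd → ℝ) → ℝ} (x : Fin dd → ℝ)

lemma pd_add (hF : ContDiff ℝ (⊤ : ℕ∞) F) (hG : ContDiff ℝ (⊤ : ℕ∞) G) :
    pd k (fun y => F y + G y) x = pd k F x + pd k G x := by
  unfold pd; rw [fderiv_fun_add (smd hF x) (smd hG x)]; rfl

lemma pd_sub (hF : ContDiff ℝ (⊤ : ℕ∞) F) (hG : ContDiff ℝ (⊤ : ℕ∞) G) :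
    pd k (fun y => F y - G y) x = pd k F x - pd k G x := by
  unfold pd; rw [fderiv_fun_sub (smd hF x) (smd hG x)]; rfl

lemma pd_mul (hF : ContDiff ℝ (⊤ : ℕ∞) F) (hG : ContDiff ℝ (⊤ : ℕ∞) G) :
    pd k (fun y => F y * G y) x = F x * pd k G x + pd k F x * G x := by
  unfold pd; rw [fderiv_fun_mul (smd hF x) (smd hG x)]; simp [mul_comm]

lemma pd_cmul (c : ℝ) (hG : ContDiff ℝ (⊤ : ℕ∞) G) :
    pd k (fun y => c * G y) x = c * pd k G x := by
  unfold pd; rw [fderiv_const_mul (smd hG x)]; simp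

lemma pd_sum {ι : Type} [Fintype ι] {F : ι → (Fin dd → ℝ) → ℝ}
    (hF : ∀ l, ContDiff ℝ (⊤ : ℕ∞) (F l)) :
    pd k (fun y => ∑ l, F l y) x = ∑ l, pd k (F l) x := by
  unfold pd; rw [fderiv_fun_sum (fun l _ => smd (hF l) x)]; simp

lemma pd_comm (l : Fin dd) (hF : ContDiff ℝ (⊤ : ℕ∞) F) :
    pd k (fun y => pd l F y) x = pd l (fun y => pd k F y) x := by
  have hs : IsSymmSndFDerivAt ℝ F x := hF.contDiffAt.isSymmSndFDerivAt (by simp; exact WithTop.coe_le_coe.2 (le_top : (2 : ℕ∞) ≤ ⊤))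
  have hd : DifferentiableAt ℝ (fderiv ℝ F) x :=
    smd (hF.fderiv_right (m := (⊤ : ℕ∞)) (by simp)) x
  unfold pd
  rw [fderiv_clm_apply hd (by fun_prop), fderiv_clm_apply hd (by fun_prop)]
  simpa using hs.eq _ _

lemma pd_congr (h : F =ᶠ[𝓝 x] G) : pd k F x = pd k G x := by
  unfold pd; rw [h.fderiv_eq]

end

/-- mixed derivative in a real parameter and a spatial direction -/
lemma pd_deriv_comm {dd : ℕ} (k : Fin dd) (F : ℝ → (Fin dd → ℝ) → ℝ)
    (hF : ContDiff ℝ (⊤ : ℕ∞) (fun q : ℝ × (Fin dd → ℝ) => F q.1 q.2)) (s : ℝ) (x : Fin dd → ℝ) :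
    HasDerivAt (fun u => pd k (F u) x) (pd k (fun y => deriv (fun u => F u y) s) x) s := by
  set H : ℝ × (Fin dd → ℝ) → ℝ := fun q => F q.1 q.2 with hH
  have hd : ∀ q, DifferentiableAt ℝ H q := fun q => smd hF q
  have hd2 : ∀ q, DifferentiableAt ℝ (fderiv ℝ H) q := fun q =>
    smd (hF.fderiv_right (m := (⊤ : ℕ∞)) (by simp)) q
  have hi : ∀ u y, HasFDerivAt (fun y : Fin dd → ℝ => ((u, y) : ℝ × (Fin dd → ℝ)))
      (ContinuousLinearMap.inr ℝ ℝ (Fin dd → ℝ)) y := fun u y => hasFDerivAt_prodMk_right u y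
  have hj : ∀ u y, HasDerivAt (fun u : ℝ => ((u, y) : ℝ × (Fin dd → ℝ))) (1, 0) u := fun u y =>
    (hasDerivAt_id u).prodMk (hasDerivAt_const u y)
  have e1 : ∀ u y, pd k (F u) y = fderiv ℝ H (u, y) (0, Pi.single k 1) := by
    intro u y
    unfold pd
    have : HasFDerivAt (F u) _ y := (hd (u, y)).hasFDerivAt.comp y (hi u y)
    rw [this.fderiv]; simp
  have e2 : ∀ u y, deriv (fun u => F u y) u = fderiv ℝ H (u, y) (1, 0) := by
    intro u y
    have := (hd (u, y)).hasFDerivAt.comp_hasDerivAt u (hj u y)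
    exact this.deriv
  have hs : IsSymmSndFDerivAt ℝ H (s, x) := hF.contDiffAt.isSymmSndFDerivAt (by simp; exact WithTop.coe_le_coe.2 (le_top : (2 : ℕ∞) ≤ ⊤))
  simp only [e1, e2]
  have h1 : HasDerivAt (fun u => fderiv ℝ H (u, x)) (fderiv ℝ (fderiv ℝ H) (s, x) (1, 0)) s :=
    (hd2 (s, x)).hasFDerivAt.comp_hasDerivAt s (hj s x)
  have h2 : HasFDerivAt (fun y => fderiv ℝ H (s, y)) _ x :=
    (hd2 (s, x)).hasFDerivAt.comp x (hi s x)
  have h3 := h1.clm_apply (hasDerivAt_const s ((0, Pi.single k 1) : ℝ × (Fin dd → ℝ)))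
  have h4 := h2.clm_apply (hasFDerivAt_const ((1, 0) : ℝ × (Fin dd → ℝ)) x)
  refine h3.congr_deriv ?_
  unfold pd
  rw [h4.fderiv]
  simpa using hs.eq _ _

/-! Lie derivative -/
section
variable {dd : ℕ}

lemma matLie_apply (X : (Fin dd → ℝ) → Fin dd → ℝ)
    (m : (Fin dd → ℝ) → Matrix (Fin dd) (Fin dd) ℝ) (x : Fin dd → ℝ) (i j : Fin dd) :
    matLie X m x i j = (∑ k, X x k * pd k (fun y => m y i j) x)
      + ∑ k, (m x k j * pd i (fun y => X y k) x + m x i k * pd j (fun y => X y k) x) := rfl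

lemma matLie_contDiff (X : (Fin dd → ℝ) → Fin dd → ℝ)
    (m : (Fin dd → ℝ) → Matrix (Fin dd) (Fin dd) ℝ)
    (hX : ∀ k, ContDiff ℝ (⊤ : ℕ∞) (fun x => X x k))
    (hm : ∀ i j, ContDiff ℝ (⊤ : ℕ∞) (fun x => m x i j)) (i j : Fin dd) :
    ContDiff ℝ (⊤ : ℕ∞) (fun x => matLie X m x i j) := by
  simp only [matLie_apply]
  refine ContDiff.add (ContDiff.sum fun k _ => (hX k).mul (pd_contDiff _ _ (hm _ _)))
    (ContDiff.sum fun k _ => ?_)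
  exact ((hm _ _).mul (pd_contDiff _ _ (hX _))).add ((hm _ _).mul (pd_contDiff _ _ (hX _)))

lemma matLie_contDiff_param (X : (Fin dd → ℝ) → Fin dd → ℝ)
    (m : ℝ → (Fin dd → ℝ) → Matrix (Fin dd) (Fin dd) ℝ)
    (hX : ∀ k, ContDiff ℝ (⊤ : ℕ∞) (fun x => X x k))
    (hm : ∀ i j, ContDiff ℝ (⊤ : ℕ∞) (fun p : ℝ × (Fin dd → ℝ) => m p.1 p.2 i j)) (i j : Fin dd) :
    ContDiff ℝ (⊤ : ℕ∞) (fun p : ℝ × (Fin dd → ℝ) => matLie X (m p.1) p.2 i j) := by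
  simp only [matLie_apply]
  refine ContDiff.add (ContDiff.sum fun k _ => ((hX k).comp contDiff_snd).mul
    (pd_contDiff_param k (fun t y => m t y i j) (hm _ _)))
    (ContDiff.sum fun k _ => ?_)
  exact ((hm _ _).mul ((pd_contDiff _ _ (hX _)).comp contDiff_snd)).add
    ((hm _ _).mul ((pd_contDiff _ _ (hX _)).comp contDiff_snd))

lemma matLie_sub_left (X Y : (Fin dd → ℝ) → Fin dd → ℝ)
    (m : (Fin dd → ℝ) → Matrix (Fin dd) (Fin dd) ℝ)
    (hX : ∀ k, ContDiff ℝ (⊤ : ℕ∞) (fun x => X x k))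
    (hY : ∀ k, ContDiff ℝ (⊤ : ℕ∞) (fun x => Y x k)) (x : Fin dd → ℝ) (i j : Fin dd) :
    matLie (fun y k => X y k - Y y k) m x i j = matLie X m x i j - matLie Y m x i j := by
  simp only [matLie_apply, pd_sub _ _ (hX _) (hY _), sub_mul, mul_sub, Finset.sum_sub_distrib,
    Finset.sum_add_distrib]
  ring

lemma matLie_add_smul (X : (Fin dd → ℝ) → Fin dd → ℝ)
    (m n : (Fin dd → ℝ) → Matrix (Fin dd) (Fin dd) ℝ)
    (hm : ∀ i j, ContDiff ℝ (⊤ : ℕ∞) (fun x => m x i j))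
    (hn : ∀ i j, ContDiff ℝ (⊤ : ℕ∞) (fun x => n x i j)) (s : ℝ)
    (x : Fin dd → ℝ) (i j : Fin dd) :
    matLie X (fun y => m y + s • n y) x i j = matLie X m x i j + s * matLie X n x i j := by
  simp only [matLie_apply, Matrix.add_apply, Matrix.smul_apply, smul_eq_mul]
  simp only [pd_add _ _ (hm _ _) (contDiff_const.mul (hn _ _)), pd_cmul _ _ _ (hn _ _), mul_add,
    Finset.mul_sum, add_mul, Finset.sum_add_distrib]
  have : ∀ k, X x k * (s * pd k (fun y => n y i j) x) = s * (X x k * pd k (fun y => n y i j) x) :=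
    fun k => by ring
  simp only [this, mul_assoc]
  ring

lemma matLie_fmul_add (X : (Fin dd → ℝ) → Fin dd → ℝ) (f : (Fin dd → ℝ) → ℝ)
    (D n : (Fin dd → ℝ) → Matrix (Fin dd) (Fin dd) ℝ)
    (hf : ContDiff ℝ (⊤ : ℕ∞) f)
    (hD : ∀ i j, ContDiff ℝ (⊤ : ℕ∞) (fun x => D x i j))
    (hn : ∀ i j, ContDiff ℝ (⊤ : ℕ∞) (fun x => n x i j))
    (x : Fin dd → ℝ) (i j : Fin dd) :
    matLie X (fun y => Matrix.of fun i j => f y * D y i j + n y i j) x i j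
      = (∑ k, X x k * pd k f x) * D x i j + f x * matLie X D x i j + matLie X n x i j := by
  simp only [matLie_apply, Matrix.of_apply]
  simp only [pd_add _ _ (hf.mul (hD _ _)) (hn _ _), pd_mul _ _ hf (hD _ _), mul_add,
    Finset.mul_sum, Finset.sum_mul, add_mul, Finset.sum_add_distrib]
  have : ∀ k, X x k * (f x * pd k (fun y => D y i j) x)
    = f x * (X x k * pd k (fun y => D y i j) x) := fun k => by ring
  simp only [this, mul_assoc]
  ring

lemma sum_antisymm (P R : Fin dd → Fin dd → ℝ) (h : ∀ k l, P k l = R k l - R l k) :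
    ∑ k, ∑ l, P k l = 0 := by
  simp only [h, Finset.sum_sub_distrib]
  rw [Finset.sum_comm (f := fun k l => R l k)]
  simp

lemma matLie_bracket (a b : (Fin dd → ℝ) → Fin dd → ℝ)
    (m : (Fin dd → ℝ) → Matrix (Fin dd) (Fin dd) ℝ)
    (ha : ∀ k, ContDiff ℝ (⊤ : ℕ∞) (fun x => a x k))
    (hb : ∀ k, ContDiff ℝ (⊤ : ℕ∞) (fun x => b x k))
    (hm : ∀ i j, ContDiff ℝ (⊤ : ℕ∞) (fun x => m x i j)) (x : Fin dd → ℝ) (i j : Fin dd) :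
    matLie a (matLie b m) x i j - matLie b (matLie a m) x i j
      = matLie (fun y l => ∑ k, (a y k * pd k (fun z => b z l) y
          - b y k * pd k (fun z => a z l) y)) m x i j := by
  have key : ∀ (a b : (Fin dd → ℝ) → Fin dd → ℝ) (_ : ∀ k, ContDiff ℝ (⊤ : ℕ∞) (fun x => a x k))
    (_ : ∀ k, ContDiff ℝ (⊤ : ℕ∞) (fun x => b x k)), matLie a (matLie b m) x i j =
      ∑ k, ∑ l, (a x k * (b x l * pd k (fun y => pd l (fun y => m y i j) y) x
          + pd k (fun y => b y l) x * pd l (fun y => m y i j) x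
          + (m x l j * pd k (fun y => pd i (fun y => b y l) y) x
            + pd k (fun y => m y l j) x * pd i (fun y => b y l) x)
          + (m x i l * pd k (fun y => pd j (fun y => b y l) y) x
            + pd k (fun y => m y i l) x * pd j (fun y => b y l) x))
        + (b x l * pd l (fun y => m y k j) x + (m x l j * pd k (fun y => b y l) x
            + m x k l * pd j (fun y => b y l) x)) * pd i (fun y => a y k) x
        + (b x l * pd l (fun y => m y i k) x + (m x l k * pd i (fun y => b y l) x
            + m x i l * pd k (fun y => b y l) x)) * pd j (fun y => a y k) x) := by
    intro a b ha hb
    have pa := fun i k => pd_contDiff i _ (ha k)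
    have pb := fun i k => pd_contDiff i _ (hb k)
    have pm := fun l i k => pd_contDiff l _ (hm i k)
    have s1 := fun (i j l : Fin dd) => (hb l).mul (pm l i j)
    have s2 := fun (i j l : Fin dd) =>
      ((hm l j).mul (pb i l)).add ((hm i l).mul (pb j l))
    have e : ∀ k, pd k (fun y => matLie b m y i j) x = ∑ l,
        (b x l * pd k (fun y => pd l (fun y => m y i j) y) x
          + pd k (fun y => b y l) x * pd l (fun y => m y i j) x
          + (m x l j * pd k (fun y => pd i (fun y => b y l) y) x
            + pd k (fun y => m y l j) x * pd i (fun y => b y l) x)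
          + (m x i l * pd k (fun y => pd j (fun y => b y l) y) x
            + pd k (fun y => m y i l) x * pd j (fun y => b y l) x)) := by
      intro k
      simp only [matLie_apply]
      rw [pd_add k x (ContDiff.sum fun l _ => s1 i j l) (ContDiff.sum fun l _ => s2 i j l),
        pd_sum k x (s1 i j), pd_sum k x (s2 i j), ← Finset.sum_add_distrib]
      refine Finset.sum_congr rfl fun l _ => ?_
      rw [pd_add k x ((hm l j).mul (pb i l)) ((hm i l).mul (pb j l)), pd_mul k x (hb l) (pm l i j),
        pd_mul k x (hm l j) (pb i l), pd_mul k x (hm i l) (pb j l)]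
      ring
    rw [matLie_apply]
    simp only [e]
    simp only [matLie_apply]
    simp only [Finset.mul_sum, Finset.sum_mul, ← Finset.sum_add_distrib]
    refine Finset.sum_congr rfl fun k _ => Finset.sum_congr rfl fun l _ => ?_
    ring
  have pa := fun i k => pd_contDiff i _ (ha k)
  have pb := fun i k => pd_contDiff i _ (hb k)
  have e : ∀ i l, pd i (fun y => ∑ k, (a y k * pd k (fun z => b z l) y
          - b y k * pd k (fun z => a z l) y)) x = ∑ k,
      (a x k * pd i (fun y => pd k (fun z => b z l) y) x
        + pd i (fun y => a y k) x * pd k (fun z => b z l) x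
        - (b x k * pd i (fun y => pd k (fun z => a z l) y) x
        + pd i (fun y => b y k) x * pd k (fun z => a z l) x)) := by
    intro i l
    rw [pd_sum i x (fun k => ((ha k).mul (pb k l)).sub ((hb k).mul (pa k l)))]
    refine Finset.sum_congr rfl fun k _ => ?_
    rw [pd_sub i x ((ha k).mul (pb k l)) ((hb k).mul (pa k l)),
      pd_mul i x (ha k) (pb k l), pd_mul i x (hb k) (pa k l)]
  have hR : matLie (fun y l => ∑ k, (a y k * pd k (fun z => b z l) y
          - b y k * pd k (fun z => a z l) y)) m x i j = ∑ k, ∑ l,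
      ((a x k * pd k (fun z => b z l) x - b x k * pd k (fun z => a z l) x)
          * pd l (fun y => m y i j) x
        + (m x l j * (a x k * pd i (fun y => pd k (fun z => b z l) y) x
        + pd i (fun y => a y k) x * pd k (fun z => b z l) x
        - (b x k * pd i (fun y => pd k (fun z => a z l) y) x
        + pd i (fun y => b y k) x * pd k (fun z => a z l) x))
        + m x i l * (a x k * pd j (fun y => pd k (fun z => b z l) y) x
        + pd j (fun y => a y k) x * pd k (fun z => b z l) x
        - (b x k * pd j (fun y => pd k (fun z => a z l) y) x
        + pd j (fun y => b y k) x * pd k (fun z => a z l) x)))) := by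
    rw [matLie_apply]
    simp only [e]
    simp only [Finset.mul_sum, Finset.sum_mul, ← Finset.sum_add_distrib]
    exact Finset.sum_comm
  rw [key a b ha hb, key b a hb ha, hR, ← sub_eq_zero]
  simp only [← Finset.sum_sub_distrib]
  refine sum_antisymm _ (fun k l => a x k * b x l * pd k (fun y => pd l (fun y => m y i j) y) x
    + a x k * pd k (fun y => m y l j) x * pd i (fun y => b y l) x
    + a x k * pd k (fun y => m y i l) x * pd j (fun y => b y l) x
    - b x k * pd k (fun y => m y l j) x * pd i (fun y => a y l) x
    - b x k * pd k (fun y => m y i l) x * pd j (fun y => a y l) x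
    + m x k l * pd j (fun y => b y l) x * pd i (fun y => a y k) x
    + m x l k * pd i (fun y => b y l) x * pd j (fun y => a y k) x) fun k l => ?_
  rw [pd_comm l x k (hm i j), pd_comm k x i (hb l), pd_comm k x j (hb l), pd_comm k x i (ha l),
    pd_comm k x j (ha l)]
  ring
end

section
variable {dd : ℕ}

lemma det_contDiff {V : Type} [NormedAddCommGroup V] [NormedSpace ℝ V]
    (M : V → Matrix (Fin dd) (Fin dd) ℝ) (hM : ∀ i j, ContDiff ℝ (⊤ : ℕ∞) (fun v => M v i j)) :
    ContDiff ℝ (⊤ : ℕ∞) (fun v => (M v).det) := by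
  simp only [Matrix.det_apply']
  exact ContDiff.sum fun σ _ => contDiff_const.mul (contDiff_prod fun i _ => hM _ _)

lemma adjugate_contDiff {V : Type} [NormedAddCommGroup V] [NormedSpace ℝ V]
    (M : V → Matrix (Fin dd) (Fin dd) ℝ) (hM : ∀ i j, ContDiff ℝ (⊤ : ℕ∞) (fun v => M v i j))
    (a b : Fin dd) : ContDiff ℝ (⊤ : ℕ∞) (fun v => (M v).adjugate a b) := by
  simp only [Matrix.adjugate_apply]
  refine det_contDiff _ fun i j => ?_
  simp only [Matrix.updateRow_apply]
  split_ifs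
  · exact contDiff_const
  · exact hM _ _

lemma inv_apply_eq (A : Matrix (Fin dd) (Fin dd) ℝ) (i j : Fin dd) :
    A⁻¹ i j = (A.det)⁻¹ * A.adjugate i j := by
  rw [Matrix.inv_def]; simp

lemma inv_contDiff {V : Type} [NormedAddCommGroup V] [NormedSpace ℝ V]
    (M : V → Matrix (Fin dd) (Fin dd) ℝ) (hM : ∀ i j, ContDiff ℝ (⊤ : ℕ∞) (fun v => M v i j))
    (hi : ∀ v, IsUnit (M v).det)
    (a b : Fin dd) : ContDiff ℝ (⊤ : ℕ∞) (fun v => (M v)⁻¹ a b) := by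
  simp only [inv_apply_eq]
  exact ((det_contDiff M hM).inv fun v => (hi v).ne_zero).mul (adjugate_contDiff M hM a b)

lemma inv_local {V : Type} [NormedAddCommGroup V] [NormedSpace ℝ V]
    (M : V → ℝ → Matrix (Fin dd) (Fin dd) ℝ)
    (hM : ∀ i j, ContDiff ℝ (⊤ : ℕ∞) (fun q : V × ℝ => M q.1 q.2 i j)) (v : V)
    (hi : ∀ t, IsUnit (M v t).det) (a b : ℝ) :
    ∃ G : Fin dd → Fin dd → V → ℝ → ℝ,
      (∀ i j, ContDiff ℝ (⊤ : ℕ∞) (fun q : V × ℝ => G i j q.1 q.2)) ∧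
      ∀ᶠ w in 𝓝 v, ∀ t ∈ Set.uIcc a b, ∀ i j, (M w t)⁻¹ i j = G i j w t := by
  have hd := det_contDiff (fun q : V × ℝ => M q.1 q.2) hM
  have hdv : Continuous fun t => |(M v t).det| :=
    (hd.continuous.comp (Continuous.prodMk_right v)).abs
  obtain ⟨τ, -, hτ⟩ := (isCompact_uIcc (a := a) (b := b)).exists_isMinOn
    Set.nonempty_uIcc hdv.continuousOn
  have hc : 0 < |(M v τ).det| := abs_pos.2 (hi τ).ne_zero
  obtain ⟨r, hr, hr'⟩ := smooth_recip (|(M v τ).det| / 2) (by positivity)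
  refine ⟨fun i j w t => r (M w t).det * (M w t).adjugate i j, fun i j =>
    (hr.comp hd).mul (adjugate_contDiff (fun q : V × ℝ => M q.1 q.2) hM i j), ?_⟩
  have : ∀ᶠ w in 𝓝 v, ∀ t ∈ Set.uIcc a b, |(M v τ).det| / 2 < |(M w t).det| := by
    refine IsCompact.eventually_forall_of_forall_eventually isCompact_uIcc fun t ht => ?_
    have h1 : |(M v τ).det| ≤ |(M v t).det| := hτ ht
    exact (hd.continuous.abs.tendsto (v, t)).eventually (lt_mem_nhds (by simp; linarith))
  filter_upwards [this] with w hw t ht i j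
  rw [inv_apply_eq, hr' _ (hw t ht)]

open scoped Matrix.Norms.Operator in
lemma inv_hasDerivAt (M : ℝ → Matrix (Fin dd) (Fin dd) ℝ) (M' : Matrix (Fin dd) (Fin dd) ℝ) (s : ℝ)
    (hM : ∀ i j, HasDerivAt (fun u => M u i j) (M' i j) s) (hi : IsUnit (M s).det) (i j : Fin dd) :
    HasDerivAt (fun u => (M u)⁻¹ i j) ((-((M s)⁻¹ * M' * (M s)⁻¹)) i j) s := by
  have h1 : HasDerivAt M M' s := hasDerivAt_pi.2 fun i => hasDerivAt_pi.2 fun j => hM i j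
  obtain ⟨u, hu⟩ := (Matrix.isUnit_iff_isUnit_det _).2 hi
  have h2 := hasFDerivAt_ringInverse (𝕜 := ℝ) u
  rw [hu] at h2
  have h3 := h2.comp_hasDerivAt s h1
  have h4 : HasDerivAt (fun u => (M u)⁻¹) (-((M s)⁻¹ * M' * (M s)⁻¹)) s := by
    have e : (fun u => (M u)⁻¹) = Ring.inverse ∘ M := by
      funext u; simp [Matrix.nonsing_inv_eq_ringInverse]
    rw [e]
    refine h3.congr_deriv ?_
    have : (M s)⁻¹ = (↑u⁻¹ : Matrix (Fin dd) (Fin dd) ℝ) := by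
      rw [← hu, Matrix.coe_units_inv]
    rw [this]
    simp
  exact hasDerivAt_pi.1 (hasDerivAt_pi.1 h4 i) j

lemma pd_hasDerivAt (k : Fin dd) (F : (Fin dd → ℝ) → ℝ) (x : Fin dd → ℝ)
    (hF : ContDiff ℝ (⊤ : ℕ∞) F) :
    HasDerivAt (fun u : ℝ => F (x + u • Pi.single k 1)) (pd k F x) 0 := by
  have h1 : HasDerivAt (fun u : ℝ => x + u • (Pi.single k 1 : Fin dd → ℝ)) (Pi.single k 1) 0 := by
    simpa using ((hasDerivAt_id (0 : ℝ)).smul_const (Pi.single k 1 : Fin dd → ℝ)).const_add x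
  have h2 : HasFDerivAt F (fderiv ℝ F x) (x + (0 : ℝ) • (Pi.single k 1 : Fin dd → ℝ)) := by
    simpa using (smd hF x).hasFDerivAt
  exact h2.comp_hasDerivAt 0 h1

lemma inv_pd (M : (Fin dd → ℝ) → Matrix (Fin dd) (Fin dd) ℝ)
    (hM : ∀ i j, ContDiff ℝ (⊤ : ℕ∞) (fun v => M v i j))
    (hi : ∀ v, IsUnit (M v).det) (k : Fin dd) (x : Fin dd → ℝ) (i j : Fin dd) :
    pd k (fun y => (M y)⁻¹ i j) x
      = (-((M x)⁻¹ * Matrix.of (fun a b => pd k (fun y => M y a b) x) * (M x)⁻¹)) i j := by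
  have h1 := pd_hasDerivAt k _ x (inv_contDiff M hM hi i j)
  have h2 := inv_hasDerivAt (fun u : ℝ => M (x + u • Pi.single k 1))
    (Matrix.of (fun a b => pd k (fun y => M y a b) x)) 0
    (fun a b => pd_hasDerivAt k _ x (hM a b)) (hi _) i j
  rw [h1.unique h2]
  simp

/-- `- h⁻¹ (L_χ h) h⁻¹ = L_χ (h⁻¹)`. -/
lemma inv_lie (χ : (Fin dd → ℝ) → Fin dd → ℝ) (M : (Fin dd → ℝ) → Matrix (Fin dd) (Fin dd) ℝ)
    (hM : ∀ i j, ContDiff ℝ (⊤ : ℕ∞) (fun v => M v i j))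
    (hi : ∀ v, IsUnit (M v).det) (x : Fin dd → ℝ) (j i : Fin dd) :
    (-((M x)⁻¹ * matLie χ M x * (M x)⁻¹)) j i
      = ∑ k, (χ x k * pd k (fun y => (M y)⁻¹ j i) x - (M x)⁻¹ k i * pd k (fun y => χ y j) x
        - (M x)⁻¹ j k * pd k (fun y => χ y i) x) := by
  set B : Matrix (Fin dd) (Fin dd) ℝ := Matrix.of fun i k => pd i (fun y => χ y k) x with hB
  set D : Fin dd → Matrix (Fin dd) (Fin dd) ℝ := fun k =>
    Matrix.of (fun a b => pd k (fun y => M y a b) x) with hD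
  have e : matLie χ M x = (∑ k, χ x k • D k) + B * M x + M x * B.transpose := by
    ext a b
    simp only [matLie_apply, Matrix.add_apply, Matrix.sum_apply, Matrix.smul_apply, smul_eq_mul,
      Matrix.mul_apply, hD, hB, Matrix.of_apply, Matrix.transpose_apply, Finset.sum_add_distrib]
    simp only [mul_comm (M x _ b)]
    ring
  have e2 : -((M x)⁻¹ * matLie χ M x * (M x)⁻¹) =
      (∑ k, χ x k • (-((M x)⁻¹ * D k * (M x)⁻¹))) - (M x)⁻¹ * B - B.transpose * (M x)⁻¹ := by
    have h1 : M x * (M x)⁻¹ = 1 := Matrix.mul_nonsing_inv _ (hi x)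
    have h2 : (M x)⁻¹ * M x = 1 := Matrix.nonsing_inv_mul _ (hi x)
    rw [e]
    simp only [mul_add, add_mul, Finset.mul_sum, Finset.sum_mul, mul_assoc, h1, mul_one, smul_neg,
      Finset.sum_neg_distrib, Matrix.mul_smul, Matrix.smul_mul]
    rw [← mul_assoc _ (M x) , h2, one_mul]
    abel
  rw [e2]
  simp only [inv_pd M hM hi, Matrix.sub_apply, Matrix.sum_apply, Matrix.smul_apply, smul_eq_mul,
    Finset.sum_sub_distrib, Matrix.mul_apply (M := (M x)⁻¹) (N := B),
    Matrix.mul_apply (M := B.transpose)]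
  simp only [hB, hD, Matrix.of_apply, Matrix.transpose_apply]
  simp only [mul_comm ((M x)⁻¹ _ i)]
  ring
end

section
variable {dd : ℕ}

lemma inv_int_contDiff (h : ℝ → (Fin dd → ℝ) → Matrix (Fin dd) (Fin dd) ℝ) (t₀ t : ℝ)
    (hh : ∀ i j, ContDiff ℝ (⊤ : ℕ∞) (fun p : ℝ × (Fin dd → ℝ) => h p.1 p.2 i j))
    (hinv : ∀ t x, IsUnit (h t x).det) (j i : Fin dd) :
    ContDiff ℝ (⊤ : ℕ∞) (fun y => ∫ s in t₀..t, (h s y)⁻¹ j i) :=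
  param_contDiff t₀ t (fun y s => (h s y)⁻¹ j i)
    ((inv_contDiff (fun p : ℝ × (Fin dd → ℝ) => h p.1 p.2) hh (fun p => hinv p.1 p.2) j i).comp
      (contDiff_snd.prodMk contDiff_fst))

lemma inv_int_pd (h : ℝ → (Fin dd → ℝ) → Matrix (Fin dd) (Fin dd) ℝ) (t₀ t : ℝ)
    (hh : ∀ i j, ContDiff ℝ (⊤ : ℕ∞) (fun p : ℝ × (Fin dd → ℝ) => h p.1 p.2 i j))
    (hinv : ∀ t x, IsUnit (h t x).det) (j i k : Fin dd) (x : Fin dd → ℝ) :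
    pd k (fun y => ∫ s in t₀..t, (h s y)⁻¹ j i) x
      = ∫ s in t₀..t, pd k (fun y => (h s y)⁻¹ j i) x := by
  have hs := (inv_contDiff (fun p : ℝ × (Fin dd → ℝ) => h p.1 p.2) hh
    (fun p => hinv p.1 p.2) j i).comp
      (contDiff_snd.prodMk (contDiff_fst (𝕜 := ℝ) (E := Fin dd → ℝ) (F := ℝ)))
  have h1 := param_hasFDerivAt (fun y s => (h s y)⁻¹ j i)
    (hs.of_le (by exact_mod_cast le_top)) t₀ t x
  unfold pd
  rw [h1.fderiv, ContinuousLinearMap.intervalIntegral_apply]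
  refine Continuous.intervalIntegrable ?_ _ _
  have h2 : ContDiff ℝ (⊤ : ℕ∞)
      (Function.uncurry (fun (s : ℝ) (w : Fin dd → ℝ) => (h s w)⁻¹ j i)) :=
    hs.comp (contDiff_snd.prodMk contDiff_fst)
  exact (ContDiff.fderiv (m := (⊤ : ℕ∞)) (n := (⊤ : ℕ∞)) h2 contDiff_const (by simp)).continuous

lemma zeta_contDiff (f : (Fin dd → ℝ) → ℝ)
    (h : ℝ → (Fin dd → ℝ) → Matrix (Fin dd) (Fin dd) ℝ) (t₀ t : ℝ)
    (hh : ∀ i j, ContDiff ℝ (⊤ : ℕ∞) (fun p : ℝ × (Fin dd → ℝ) => h p.1 p.2 i j))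
    (hinv : ∀ t x, IsUnit (h t x).det) (hf : ContDiff ℝ (⊤ : ℕ∞) f) (i : Fin dd) :
    ContDiff ℝ (⊤ : ℕ∞) (fun y => zeta f h t₀ t y i) := by
  unfold zeta
  exact ContDiff.sum fun j _ => (pd_contDiff _ _ hf).mul (inv_int_contDiff h t₀ t hh hinv j i)

lemma zeta_var (h : ℝ → (Fin dd → ℝ) → Matrix (Fin dd) (Fin dd) ℝ)
    (f : (Fin dd → ℝ) → ℝ) (χ : (Fin dd → ℝ) → Fin dd → ℝ) (t₀ t : ℝ)
    (hh : ∀ i j, ContDiff ℝ (⊤ : ℕ∞) (fun p : ℝ × (Fin dd → ℝ) => h p.1 p.2 i j))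
    (hinv : ∀ t x, IsUnit (h t x).det)
    (hf : ContDiff ℝ (⊤ : ℕ∞) f) (hχ : ∀ k, ContDiff ℝ (⊤ : ℕ∞) (fun x => χ x k))
    (x : Fin dd → ℝ) (i : Fin dd) :
    ∑ j, pd j f x * ∫ s in t₀..t, (-((h s x)⁻¹ * matLie χ (h s) x * (h s x)⁻¹)) j i
      = (∑ k, (χ x k * pd k (fun z => zeta f h t₀ t z i) x
          - zeta f h t₀ t x k * pd k (fun z => χ z i) x))
        - zeta (fun y => ∑ k, χ y k * pd k f y) h t₀ t x i := by
  have hm : ∀ s i j, ContDiff ℝ (⊤ : ℕ∞) (fun y => h s y i j) := fun s i j =>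
    (hh i j).comp (contDiff_const.prodMk contDiff_id)
  have hI := fun j i => inv_contDiff (fun p : ℝ × (Fin dd → ℝ) => h p.1 p.2) hh
    (fun p => hinv p.1 p.2) j i
  have c1 : ∀ j i, IntervalIntegrable (fun s => (h s x)⁻¹ j i) volume t₀ t := fun j i =>
    ((hI j i).continuous.comp (Continuous.prodMk_left x)).intervalIntegrable _ _
  have c2 : ∀ k j i, IntervalIntegrable (fun s => pd k (fun y => (h s y)⁻¹ j i) x) volume t₀ t :=
    fun k j i => ((pd_contDiff_param k (fun s y => (h s y)⁻¹ j i) (hI j i)).continuous.comp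
      (Continuous.prodMk_left x)).intervalIntegrable _ _
  set J : Fin dd → Fin dd → (Fin dd → ℝ) → ℝ := fun j i y => ∫ s in t₀..t, (h s y)⁻¹ j i with hJ
  have sJ : ∀ j i, ContDiff ℝ (⊤ : ℕ∞) (J j i) := inv_int_contDiff h t₀ t hh hinv
  have e1 : ∀ j, ∫ s in t₀..t, (-((h s x)⁻¹ * matLie χ (h s) x * (h s x)⁻¹)) j i
      = ∑ k, (χ x k * pd k (J j i) x - J k i x * pd k (fun y => χ y j) x
        - J j k x * pd k (fun y => χ y i) x) := by
    intro j
    simp only [inv_lie χ (h _) (hm _) (hinv _) x]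
    rw [intervalIntegral.integral_finsetSum]
    · refine Finset.sum_congr rfl fun k _ => ?_
      rw [intervalIntegral.integral_sub (((c2 _ _ _).const_mul _).sub ((c1 _ _).mul_const _))
        ((c1 _ _).mul_const _), intervalIntegral.integral_sub ((c2 _ _ _).const_mul _)
        ((c1 _ _).mul_const _), intervalIntegral.integral_const_mul,
        intervalIntegral.integral_mul_const, intervalIntegral.integral_mul_const,
        hJ, inv_int_pd h t₀ t hh hinv]
    · intro k _
      exact (((c2 _ _ _).const_mul _).sub ((c1 _ _).mul_const _)).sub ((c1 _ _).mul_const _)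
  have pf := fun k => pd_contDiff k f hf
  have e2 : ∀ k, pd k (fun z => zeta f h t₀ t z i) x
      = ∑ j, (pd j f x * pd k (J j i) x + pd k (fun y => pd j f y) x * J j i x) := by
    intro k
    have : (fun z => zeta f h t₀ t z i) = fun z => ∑ j, pd j f z * J j i z := rfl
    rw [this, pd_sum k x (fun j => (pf j).mul (sJ j i))]
    exact Finset.sum_congr rfl fun j _ => pd_mul k x (pf j) (sJ j i)
  have e3 : ∀ k, zeta f h t₀ t x k = ∑ j, pd j f x * J j k x := fun k => rfl
  have e4 : zeta (fun y => ∑ k, χ y k * pd k f y) h t₀ t x i = ∑ j, ∑ k,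
      (χ x k * pd j (fun y => pd k f y) x + pd j (fun y => χ y k) x * pd k f x) * J j i x := by
    unfold zeta
    refine Finset.sum_congr rfl fun j _ => ?_
    rw [pd_sum j x (fun k => (hχ k).mul (pf k)), Finset.sum_mul]
    exact Finset.sum_congr rfl fun k _ => by rw [pd_mul j x (hχ k) (pf k)]
  have e5 : (∑ k, (χ x k * pd k (fun z => zeta f h t₀ t z i) x
          - zeta f h t₀ t x k * pd k (fun z => χ z i) x)) = ∑ j, ∑ k,
      (χ x k * (pd j f x * pd k (J j i) x + pd k (fun y => pd j f y) x * J j i x)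
        - pd j f x * J j k x * pd k (fun z => χ z i) x) := by
    simp only [e2, e3]
    simp only [Finset.mul_sum, Finset.sum_mul, ← Finset.sum_sub_distrib]
    exact Finset.sum_comm
  rw [e5, e4, ← sub_eq_zero]
  simp only [e1, Finset.mul_sum, ← Finset.sum_sub_distrib]
  refine sum_antisymm _ (fun j k => - (pd j f x * J k i x * pd k (fun y => χ y j) x))
    fun j k => ?_
  rw [pd_comm k x j hf]
  ring
end

/-- variation of `δ_f h` under `h ↦ h + s L_χ h` -/
lemma first_var {dd : ℕ} (h : ℝ → (Fin dd → ℝ) → Matrix (Fin dd) (Fin dd) ℝ)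
    (f : (Fin dd → ℝ) → ℝ) (χ : (Fin dd → ℝ) → Fin dd → ℝ) (t₀ : ℝ)
    (hh : ∀ i j, ContDiff ℝ (⊤ : ℕ∞) (fun p : ℝ × (Fin dd → ℝ) => h p.1 p.2 i j))
    (hinv : ∀ t x, IsUnit (h t x).det)
    (hf : ContDiff ℝ (⊤ : ℕ∞) f) (hχ : ∀ k, ContDiff ℝ (⊤ : ℕ∞) (fun x => χ x k))
    (t : ℝ) (x : Fin dd → ℝ) (i j : Fin dd) :
    HasDerivAt (fun s : ℝ =>
          deltaF f (fun t' x' => h t' x' + s • deltaChi χ h t' x') t₀ t x i j)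
      (f x * matLie χ (fun y => Matrix.of fun a b => deriv (fun u => h u y a b) t) x i j
        + (matLie (fun y i => ∑ j, pd j f y *
            ∫ s in t₀..t, (-((h s y)⁻¹ * matLie χ (h s) y * (h s y)⁻¹)) j i) (h t) x i j
        + matLie (zeta f h t₀ t) (matLie χ (h t)) x i j)) 0 := by
  have hm : ∀ s i j, ContDiff ℝ (⊤ : ℕ∞) (fun y => h s y i j) := fun s i j =>
    (hh i j).comp (contDiff_const.prodMk contDiff_id)
  have hT : ∀ y i j, ContDiff ℝ (⊤ : ℕ∞) (fun s => h s y i j) := fun s i j =>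
    (hh i j).comp (contDiff_id.prodMk contDiff_const)
  have hK := fun i j => matLie_contDiff_param χ h hχ hh i j
  have hk : ∀ s i j, ContDiff ℝ (⊤ : ℕ∞) (fun y => matLie χ (h s) y i j) := fun s i j =>
    (hK i j).comp (contDiff_const.prodMk contDiff_id)
  set M : (ℝ × (Fin dd → ℝ)) → ℝ → Matrix (Fin dd) (Fin dd) ℝ :=
    fun p t' => h t' p.2 + p.1 • matLie χ (h t') p.2 with hMdef
  have hM : ∀ i j, ContDiff ℝ (⊤ : ℕ∞) (fun q : (ℝ × (Fin dd → ℝ)) × ℝ => M q.1 q.2 i j) := by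
    intro i j
    simp only [hMdef, Matrix.add_apply, Matrix.smul_apply, smul_eq_mul]
    have hp : ContDiff ℝ (⊤ : ℕ∞) (fun q : (ℝ × (Fin dd → ℝ)) × ℝ => (q.2, q.1.2)) :=
      contDiff_snd.prodMk (contDiff_snd.comp contDiff_fst)
    exact ((hh i j).comp hp).add ((contDiff_fst.comp contDiff_fst).mul ((hK i j).comp hp))
  obtain ⟨G, hGs, hG⟩ := inv_local M hM (0, x) (fun t' => by simpa [hMdef] using hinv t' x) t₀ t
  set Z : ℝ → (Fin dd → ℝ) → Fin dd → ℝ := fun s y i =>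
    ∑ j, pd j f y * ∫ t' in t₀..t, G j i (s, y) t' with hZdef
  have hZs : ∀ i, ContDiff ℝ (⊤ : ℕ∞) (fun q : ℝ × (Fin dd → ℝ) => Z q.1 q.2 i) := by
    intro i
    exact ContDiff.sum fun j _ => ((pd_contDiff _ _ hf).comp contDiff_snd).mul
      (param_contDiff t₀ t (fun q t' => G j i q t') (hGs j i))
  have hZ : ∀ᶠ p in 𝓝 ((0 : ℝ), x), ∀ i,
      zeta f (fun t' x' => h t' x' + p.1 • deltaChi χ h t' x') t₀ t p.2 i = Z p.1 p.2 i := by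
    filter_upwards [hG] with p hp i
    refine Finset.sum_congr rfl fun j _ => ?_
    congr 1
    exact intervalIntegral.integral_congr fun t' ht' => hp t' ht' j i
  set W : (Fin dd → ℝ) → Fin dd → ℝ := fun y i => ∑ j, pd j f y *
            ∫ s in t₀..t, (-((h s y)⁻¹ * matLie χ (h s) y * (h s y)⁻¹)) j i with hWdef
  have hpt : Tendsto (fun y : Fin dd → ℝ => ((0 : ℝ), y)) (𝓝 x) (𝓝 (0, x)) :=
    (Continuous.prodMk_right (0 : ℝ)).tendsto x
  have hW : ∀ᶠ y in 𝓝 x, ∀ i, HasDerivAt (fun s => Z s y i) (W y i) 0 := by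
    filter_upwards [hpt.eventually hG.eventually_nhds] with y hy i
    have hst : Tendsto (fun s : ℝ => (s, y)) (𝓝 0) (𝓝 (0, y)) :=
      (Continuous.prodMk_left y).tendsto 0
    have hy2 := hst.eventually hy
    refine HasDerivAt.fun_sum fun j _ => HasDerivAt.const_mul _ ?_
    have hs1 : ContDiff ℝ (⊤ : ℕ∞) (fun q : ℝ × ℝ => G j i (q.1, y) q.2) :=
      (hGs j i).comp ((contDiff_fst.prodMk contDiff_const).prodMk contDiff_snd)
    have h1 := (param_hasFDerivAt (fun s t' => G j i (s, y) t')
      (hs1.of_le (by exact_mod_cast le_top)) t₀ t 0).hasDerivAt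
    refine h1.congr_deriv ?_
    have h2 : ContDiff ℝ (⊤ : ℕ∞)
        (Function.uncurry (fun (t' : ℝ) (s : ℝ) => G j i (s, y) t')) :=
      hs1.comp (contDiff_snd.prodMk contDiff_fst)
    rw [ContinuousLinearMap.intervalIntegral_apply ((ContDiff.fderiv (m := (⊤ : ℕ∞))
      (n := (⊤ : ℕ∞)) h2 contDiff_const (by simp)).continuous.intervalIntegrable _ _)]
    refine intervalIntegral.integral_congr fun t' ht' => ?_
    have h3 : (fun s => G j i (s, y) t') =ᶠ[𝓝 0] fun s => (M (s, y) t')⁻¹ j i := by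
      filter_upwards [hy2] with s hs
      exact (hs t' ht' j i).symm
    have h4 := inv_hasDerivAt (fun s => M (s, y) t') (matLie χ (h t') y) 0 (fun a b => by
      simpa [hMdef] using ((hasDerivAt_id (0 : ℝ)).mul_const
        (matLie χ (h t') y a b)).const_add (h t' y a b)) (by simpa [hMdef] using hinv t' y) j i
    have h5 := (h4.congr_of_eventuallyEq h3).deriv
    simp only [fderiv_apply_one_eq_deriv, h5]
    simp [hMdef]
  have hZ0 : ∀ᶠ y in 𝓝 x, ∀ i, Z 0 y i = zeta f h t₀ t y i := by
    filter_upwards [hpt.eventually hZ] with y hy i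
    simpa using (hy i).symm
  have dZ : ∀ k l, HasDerivAt (fun s => pd k (fun y => Z s y l) x) (pd k (fun y => W y l) x) 0 := by
    intro k l
    refine (pd_deriv_comm k (fun s y => Z s y l) (hZs l) 0 x).congr_deriv ?_
    refine pd_congr k x ?_
    filter_upwards [hW] with y hy
    exact (hy l).deriv
  have dT : ∀ a b, HasDerivAt (fun u => h u x a b) (deriv (fun u => h u x a b) t) t := fun a b =>
    (smd (hT x a b) t).hasDerivAt
  have dK : HasDerivAt (fun u => matLie χ (h u) x i j)
      (matLie χ (fun y => Matrix.of fun a b => deriv (fun u => h u y a b) t) x i j) t := by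
    simp only [matLie_apply, Matrix.of_apply]
    exact (HasDerivAt.fun_sum fun k _ =>
      (pd_deriv_comm k (fun u y => h u y i j) (hh i j) t x).const_mul _).add
      (HasDerivAt.fun_sum fun k _ => ((dT k j).mul_const _).add ((dT i k).mul_const _))
  set L := matLie χ (fun y => Matrix.of fun a b => deriv (fun u => h u y a b) t) x i j with hL
  have hφ : (fun s : ℝ =>
      deltaF f (fun t' x' => h t' x' + s • deltaChi χ h t' x') t₀ t x i j) =ᶠ[𝓝 0]
      fun s => f x * (deriv (fun u => h u x i j) t + s * L)
        + ((∑ k, Z s x k * (pd k (fun y => h t y i j) x + s * pd k (fun y => matLie χ (h t) y i j) x))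
          + ∑ k, ((h t x k j + s * matLie χ (h t) x k j) * pd i (fun y => Z s y k) x
            + (h t x i k + s * matLie χ (h t) x i k) * pd j (fun y => Z s y k) x)) := by
    have hst : Tendsto (fun s : ℝ => (s, x)) (𝓝 0) (𝓝 (0, x)) :=
      (Continuous.prodMk_left x).tendsto 0
    filter_upwards [hst.eventually hZ.eventually_nhds] with s hs
    have hys : Tendsto (fun y : Fin dd → ℝ => (s, y)) (𝓝 x) (𝓝 (s, x)) :=
      (Continuous.prodMk_right s).tendsto x
    have hs2 := hys.eventually hs
    have q1 : ∀ k l, pd k (fun y =>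
        zeta f (fun t' x' => h t' x' + s • deltaChi χ h t' x') t₀ t y l) x
        = pd k (fun y => Z s y l) x := fun k l =>
      pd_congr k x (by filter_upwards [hs2] with y hy; exact hy l)
    have q2 : ∀ l, zeta f (fun t' x' => h t' x' + s • deltaChi χ h t' x') t₀ t x l = Z s x l :=
      fun l => hs2.self_of_nhds l
    have q3 : deriv (fun u => (h u x + s • deltaChi χ h u x) i j) t
        = deriv (fun u => h u x i j) t + s * L := ((dT i j).add (dK.const_mul s)).deriv
    have q4 : ∀ k, pd k (fun y => (h t y + s • deltaChi χ h t y) i j) x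
        = pd k (fun y => h t y i j) x + s * pd k (fun y => matLie χ (h t) y i j) x := by
      intro k
      rw [← pd_cmul k x s (hk t i j), ← pd_add k x (hm t i j) (contDiff_const.mul (hk t i j))]
      rfl
    unfold deltaF
    simp only [Matrix.of_apply, matLie_apply, q1, q2, q3, q4]
    rfl
  refine HasDerivAt.congr_of_eventuallyEq ?_ hφ
  have dlin : ∀ a b : ℝ, HasDerivAt (fun s : ℝ => a + s * b) b 0 := fun a b => by
    simpa using ((hasDerivAt_id (0 : ℝ)).mul_const b).const_add a
  have key := ((dlin (deriv (fun u => h u x i j) t) L).const_mul (f x)).add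
    ((HasDerivAt.fun_sum (u := Finset.univ) fun k _ => (hW.self_of_nhds k).mul
      (dlin (pd k (fun y => h t y i j) x) (pd k (fun y => matLie χ (h t) y i j) x))).add
     (HasDerivAt.fun_sum (u := Finset.univ) fun k _ =>
      ((dlin (h t x k j) (matLie χ (h t) x k j)).mul (dZ i k)).add
      ((dlin (h t x i k) (matLie χ (h t) x i k)).mul (dZ j k))))
  refine key.congr_deriv ?_
  have r1 : ∀ k l, pd k (fun y => Z 0 y l) x = pd k (fun y => zeta f h t₀ t y l) x := fun k l =>
    pd_congr k x (by filter_upwards [hZ0] with y hy; exact hy l)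
  have r2 : ∀ l, Z 0 x l = zeta f h t₀ t x l := hZ0.self_of_nhds
  rw [matLie_apply W, matLie_apply (zeta f h t₀ t)]
  simp only [r1, r2, zero_mul, add_zero, Finset.sum_add_distrib]
  ring

/-- For a smooth one-parameter family of (invertible) metrics `h(t)` and
the field-dependent variation `δ_f h = f ḣ + L_{ζ_f[h]} h`, where
`ζ_f[h]ⁱ = ∂_j f ∫_{t₀}^t hʲⁱ`, and the variation `δ_χ h = L_χ h` along a
time-independent spatial vector field `χ`, the commutator of variations (computed by
expanding the field dependence of `ζ_f[h]` to first order) satisfies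
`[δ_f, δ_χ] h = − δ_{χ(f)} h = −(χ(f) ḣ + L_{ζ_{χ(f)}[h]} h)`. -/
theorem stmt9 {dd : ℕ} (h : ℝ → (Fin dd → ℝ) → Matrix (Fin dd) (Fin dd) ℝ)
    (f : (Fin dd → ℝ) → ℝ) (χ : (Fin dd → ℝ) → Fin dd → ℝ) (t₀ : ℝ)
    (hh : ∀ i j, ContDiff ℝ (⊤ : ℕ∞) (fun p : ℝ × (Fin dd → ℝ) => h p.1 p.2 i j))
    (hsymm : ∀ t x i j, h t x i j = h t x j i)
    (hinv : ∀ t x, IsUnit (h t x).det)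
    (hf : ContDiff ℝ (⊤ : ℕ∞) f) (hχ : ∀ k, ContDiff ℝ (⊤ : ℕ∞) (fun x => χ x k)) :
    ∀ (t : ℝ) (x : Fin dd → ℝ) (i j : Fin dd),
      deriv (fun s : ℝ =>
          deltaF f (fun t' x' => h t' x' + s • deltaChi χ h t' x') t₀ t x i j) 0
        - deriv (fun s : ℝ =>
          deltaChi χ (fun t' x' => h t' x' + s • deltaF f h t₀ t' x') t x i j) 0
      = - deltaF (fun y => ∑ k, χ y k * pd k f y) h t₀ t x i j := by

  intro t x i j
  have hm : ∀ s i j, ContDiff ℝ (⊤ : ℕ∞) (fun y => h s y i j) := fun s i j =>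
    (hh i j).comp (contDiff_const.prodMk contDiff_id)
  have hk := matLie_contDiff χ (h t) hχ (hm t)
  have hζ := zeta_contDiff f h t₀ t hh hinv hf
  have hχf : ContDiff ℝ (⊤ : ℕ∞) (fun y => ∑ k, χ y k * pd k f y) :=
    ContDiff.sum fun k _ => (hχ k).mul (pd_contDiff k f hf)
  have hζ' := zeta_contDiff _ h t₀ t hh hinv hχf
  have hD : ∀ a b, ContDiff ℝ (⊤ : ℕ∞)
      (fun y => (Matrix.of fun a b => deriv (fun u => h u y a b) t : Matrix _ _ ℝ) a b) := by
    intro a b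
    simp only [Matrix.of_apply, ← fderiv_apply_one_eq_deriv]
    have h2 : ContDiff ℝ (⊤ : ℕ∞)
        (Function.uncurry (fun (y : Fin dd → ℝ) (s : ℝ) => h s y a b)) :=
      (hh a b).comp (contDiff_snd.prodMk contDiff_fst)
    exact (ContDiff.fderiv (m := (⊤ : ℕ∞)) (n := (⊤ : ℕ∞)) h2 contDiff_const (by simp)).clm_apply
      contDiff_const
  have hn := matLie_contDiff (zeta f h t₀ t) (h t) hζ (hm t)
  have hF : ∀ a b, ContDiff ℝ (⊤ : ℕ∞) (fun y => deltaF f h t₀ t y a b) := fun a b =>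
    (hf.mul (hD a b)).add (hn a b)
  have e2 : (fun s : ℝ =>
      deltaChi χ (fun t' x' => h t' x' + s • deltaF f h t₀ t' x') t x i j)
      = fun s => matLie χ (h t) x i j + s * matLie χ (deltaF f h t₀ t) x i j := by
    funext s
    exact matLie_add_smul χ (h t) (deltaF f h t₀ t) (hm t) hF s x i j
  have e3 : HasDerivAt (fun s : ℝ => matLie χ (h t) x i j
      + s * matLie χ (deltaF f h t₀ t) x i j) (matLie χ (deltaF f h t₀ t) x i j) 0 := by
    simpa using ((hasDerivAt_id (0 : ℝ)).mul_const
      (matLie χ (deltaF f h t₀ t) x i j)).const_add (matLie χ (h t) x i j)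
  have e4 : matLie χ (deltaF f h t₀ t) x i j = _ :=
    matLie_fmul_add χ f (fun y => Matrix.of fun a b => deriv (fun u => h u y a b) t)
      (matLie (zeta f h t₀ t) (h t)) hf hD hn x i j
  rw [(first_var h f χ t₀ hh hinv hf hχ t x i j).deriv, e2, e3.deriv, e4]
  simp only [zeta_var h f χ t₀ t hh hinv hf hχ]
  have hbr : ∀ l, ContDiff ℝ (⊤ : ℕ∞) (fun y => ∑ k, (χ y k * pd k (fun z => zeta f h t₀ t z l) y
      - zeta f h t₀ t y k * pd k (fun z => χ z l) y)) := fun l =>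
    ContDiff.sum fun k _ => ((hχ k).mul (pd_contDiff k _ (hζ l))).sub
      ((hζ k).mul (pd_contDiff k _ (hχ l)))
  rw [matLie_sub_left _ (zeta (fun y => ∑ k, χ y k * pd k f y) h t₀ t) (h t) hbr hζ' x i j,
    ← matLie_bracket χ (zeta f h t₀ t) (h t) hχ hζ (hm t)]
  have e5 : deltaF (fun y => ∑ k, χ y k * pd k f y) h t₀ t x i j
      = (∑ k, χ x k * pd k f x) * deriv (fun s => h s x i j) t
        + matLie (zeta (fun y => ∑ k, χ y k * pd k f y) h t₀ t) (h t) x i j := rfl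
  rw [e5]
  simp only [Matrix.of_apply]
  ring
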